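/- arXiv:1512.00247 — 3 statements merged into one kernel-verified Lean document; each statement's English description precedes it below -/
import Mathlib

section
/- Both σ₁ and σ₂ have infinite projective dimension over A: for every natural number n, neither σ₁ nor σ₂ has projective dimension ≤ n as a right A-module. -/
set_option synthInstance.maxHeartbeats 1000000
set_option maxHeartbeats 2000000

open TrivSqZeroExt Matrix

noncomputable section

variable (k : Type) [Field k]

/-- The `k`-subalgebra `A` of the `2 × 2` matrix algebra over the dual numbers `k[ε]`
consisting of those matrices whose two off-diagonal entries have vanishing constant term. -/
def offDiagNilpotentSubalgebra :
    Subalgebra k (Matrix (Fin 2) (Fin 2) (DualNumber k)) where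
  carrier := {M | (M 0 1).fst = 0 ∧ (M 1 0).fst = 0}
  add_mem' := by
    rintro a b ⟨ha1, ha2⟩ ⟨hb1, hb2⟩
    constructor <;> simp_all [Matrix.add_apply]
  mul_mem' := by
    rintro a b ⟨ha1, ha2⟩ ⟨hb1, hb2⟩
    constructor <;>
      simp [Matrix.mul_apply, Fin.sum_univ_two, ha1, ha2, hb1, hb2]
  algebraMap_mem' := by
    intro c
    constructor <;>
      simp [Matrix.algebraMap_matrix_apply]

/-- The four-dimensional algebra `A`. -/
abbrev AAlg := offDiagNilpotentSubalgebra k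

/-- The character of `A` sending a matrix to the constant term of its `(1,1)` entry. -/
def chi1 : AAlg k →+* k where
  toFun a := ((a : Matrix (Fin 2) (Fin 2) (DualNumber k)) 0 0).fst
  map_one' := by simp [Matrix.one_apply]
  map_mul' a b := by
    have hb := b.2.2
    simp [Matrix.mul_apply, Fin.sum_univ_two, hb]
  map_zero' := by simp
  map_add' a b := by simp [Matrix.add_apply]

/-- The character of `A` sending a matrix to the constant term of its `(2,2)` entry. -/
def chi2 : AAlg k →+* k where
  toFun a := ((a : Matrix (Fin 2) (Fin 2) (DualNumber k)) 1 1).fst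
  map_one' := by simp [Matrix.one_apply]
  map_mul' a b := by
    have ha := a.2.2
    simp [Matrix.mul_apply, Fin.sum_univ_two, ha]
  map_zero' := by simp
  map_add' a b := by simp [Matrix.add_apply]

/-- `chi1` as a ring homomorphism on `Aᵐᵒᵖ` (right modules = left `Aᵐᵒᵖ`-modules). -/
def chi1op : (AAlg k)ᵐᵒᵖ →+* k where
  toFun a := chi1 k a.unop
  map_one' := (chi1 k).map_one
  map_mul' _ _ := ((chi1 k).map_mul _ _).trans (mul_comm _ _)
  map_zero' := (chi1 k).map_zero
  map_add' _ _ := (chi1 k).map_add _ _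

/-- `chi2` as a ring homomorphism on `Aᵐᵒᵖ`. -/
def chi2op : (AAlg k)ᵐᵒᵖ →+* k where
  toFun a := chi2 k a.unop
  map_one' := (chi2 k).map_one
  map_mul' _ _ := ((chi2 k).map_mul _ _).trans (mul_comm _ _)
  map_zero' := (chi2 k).map_zero
  map_add' _ _ := (chi2 k).map_add _ _

/-- `σ₁`: the one-dimensional right `A`-module `k` on which a matrix acts by the constant
term of its `(1,1)` entry, realized as a left module over `Aᵐᵒᵖ`. -/
def Sigma1 : Type := k

instance : AddCommGroup (Sigma1 k) := inferInstanceAs (AddCommGroup k)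
instance : Module (AAlg k)ᵐᵒᵖ (Sigma1 k) := Module.compHom k (chi1op k)

/-- `σ₂`: the one-dimensional right `A`-module `k` on which a matrix acts by the constant
term of its `(2,2)` entry, realized as a left module over `Aᵐᵒᵖ`. -/
def Sigma2 : Type := k

instance : AddCommGroup (Sigma2 k) := inferInstanceAs (AddCommGroup k)
instance : Module (AAlg k)ᵐᵒᵖ (Sigma2 k) := Module.compHom k (chi2op k)

/-- `ProjDimLE R n M` means that the `R`-module `M` admits a projective resolution of
length at most `n`: for `n = 0` it means `M` is projective, and for `n + 1` it means there
is a surjection from a projective module onto `M` whose kernel has projective dimension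
at most `n`. -/
def ProjDimLE (R : Type u) [Ring R] : ∀ (n : ℕ) (M : Type v) [AddCommGroup M] [Module R M], Prop
  | 0, M, _, _ => Module.Projective R M
  | n + 1, M, _, _ =>
      ∃ (P : Type v) (_ : AddCommGroup P) (_ : Module R P) (f : P →ₗ[R] M),
        Module.Projective R P ∧ Function.Surjective f ∧
          ProjDimLE R n (LinearMap.ker f)

/-- Obstruction property: every element killed by `a` becomes, after multiplication by `e`,
an element of `a M + b M`. -/
def ZProp {R : Type u} [Ring R] (e a b : R) (M : Type v) [AddCommGroup M] [Module R M] : Prop :=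
  ∀ x : M, a • x = 0 → ∃ r s : M, e • x = a • r + b • s

/-- An independence property of `a`, `b` in the ring passes to projective modules. -/
theorem proj_indep {R : Type u} [Ring R] (e a b : R)
    (h : ∀ c d : R, a * c + b * d = 0 → ∃ r s : R, e * c = a * r + b * s)
    (P : Type v) [AddCommGroup P] [Module R P] [hP : Module.Projective R P]
    (x y : P) (hxy : a • x + b • y = 0) : ∃ r s : P, e • x = a • r + b • s := by
  obtain ⟨s, hs⟩ := hP.out
  have h1 : ∀ i : P, ∃ r t : R, e * (s x) i = a * r + b * t := by
    intro i
    apply h _ (s y i)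
    have h2 : s (a • x + b • y) = 0 := by rw [hxy, map_zero]
    have h3 := DFunLike.congr_fun h2 i
    simpa using h3
  choose r t hrt using h1
  refine ⟨∑ i ∈ (s x).support, r i • i, ∑ i ∈ (s x).support, t i • i, ?_⟩
  conv_lhs => rw [← hs x]
  rw [Finsupp.linearCombination_apply, Finsupp.sum, Finset.smul_sum, Finset.smul_sum,
    Finset.smul_sum, ← Finset.sum_add_distrib]
  refine Finset.sum_congr rfl fun i _ => ?_
  simp only [id, smul_smul]
  rw [hrt, add_smul]

theorem zprop_of_projDimLE {R : Type u} [Ring R] (e a b : R)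
    (h : ∀ c d : R, a * c + b * d = 0 → ∃ r s : R, e * c = a * r + b * s)
    (haa : a * a = 0) (hea : e * a = a) (n : ℕ) :
    ∀ (M : Type v) [AddCommGroup M] [Module R M], ProjDimLE R n M → ZProp e a b M := by
  induction n with
  | zero =>
    intro M _ _ hM x hx
    have : Module.Projective R M := hM
    exact proj_indep e a b h M x 0 (by simp [hx])
  | succ n ih =>
    intro M _ _ hM x hx
    obtain ⟨P, _, _, f, hP, hf, hK⟩ := hM
    obtain ⟨p, rfl⟩ := hf x
    have hk : a • p ∈ LinearMap.ker f := by
      rw [LinearMap.mem_ker, map_smul, hx]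
    obtain ⟨u, v, huv⟩ := ih _ hK ⟨a • p, hk⟩ (by
      apply Subtype.ext
      simp [smul_smul, haa])
    have huv' := congrArg Subtype.val huv
    simp only [Submodule.coe_smul, Submodule.coe_add, smul_smul, hea] at huv'
    obtain ⟨r, s, hrs⟩ := proj_indep e a b h P (p - u) (-v) (by
      rw [smul_sub, huv', smul_neg]; abel)
    refine ⟨f r, f s, ?_⟩
    have h4 := congrArg f hrs
    have hu : f (u : P) = 0 := u.2
    simpa [hu] using h4

/-- The element of `A` with given entries. -/
def mkA (p q : DualNumber k) (r s : k) : AAlg k :=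
  ⟨!![p, inr r; inr s, q], by constructor <;> simp⟩

theorem indep1 (c d : (AAlg k)ᵐᵒᵖ)
    (h : MulOpposite.op (mkA k (inr 1) 0 0 0) * c + MulOpposite.op (mkA k 0 0 0 1) * d = 0) :
    ∃ r s, MulOpposite.op (mkA k 1 0 0 0) * c =
      MulOpposite.op (mkA k (inr 1) 0 0 0) * r + MulOpposite.op (mkA k 0 0 0 1) * s := by
  induction c with | _ c
  induction d with | _ d
  obtain ⟨c, hc1, hc2⟩ := c
  obtain ⟨d, hd1, hd2⟩ := d
  have h' := congrArg (fun z => ((MulOpposite.unop z).1 0 0).snd) h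
  simp [mkA, Matrix.mul_apply, Fin.sum_univ_two, hd1] at h'
  refine ⟨MulOpposite.op (mkA k (inl (c 0 0).snd) 0 0 0),
    MulOpposite.op (mkA k 0 (inl (c 1 0).snd) 0 0), ?_⟩
  apply MulOpposite.unop_injective
  apply Subtype.ext
  ext i j <;> fin_cases i <;> fin_cases j <;>
    simp_all [mkA, Matrix.mul_apply, Fin.sum_univ_two]

theorem indep2 (c d : (AAlg k)ᵐᵒᵖ)
    (h : MulOpposite.op (mkA k 0 (inr 1) 0 0) * c + MulOpposite.op (mkA k 0 0 1 0) * d = 0) :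
    ∃ r s, MulOpposite.op (mkA k 0 1 0 0) * c =
      MulOpposite.op (mkA k 0 (inr 1) 0 0) * r + MulOpposite.op (mkA k 0 0 1 0) * s := by
  induction c with | _ c
  induction d with | _ d
  obtain ⟨c, hc1, hc2⟩ := c
  obtain ⟨d, hd1, hd2⟩ := d
  have h' := congrArg (fun z => ((MulOpposite.unop z).1 1 1).snd) h
  simp [mkA, Matrix.mul_apply, Fin.sum_univ_two, hd2] at h'
  refine ⟨MulOpposite.op (mkA k 0 (inl (c 1 1).snd) 0 0),
    MulOpposite.op (mkA k (inl (c 0 1).snd) 0 0 0), ?_⟩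
  apply MulOpposite.unop_injective
  apply Subtype.ext
  ext i j <;> fin_cases i <;> fin_cases j <;>
    simp_all [mkA, Matrix.mul_apply, Fin.sum_univ_two]

theorem smul_sigma1 (z : (AAlg k)ᵐᵒᵖ) (x : Sigma1 k) :
    z • x = (show k from (z.unop.1 0 0).fst * (show k from x)) := rfl

theorem smul_sigma2 (z : (AAlg k)ᵐᵒᵖ) (x : Sigma2 k) :
    z • x = (show k from (z.unop.1 1 1).fst * (show k from x)) := rfl

theorem mulA (x y z : AAlg k) (h : ∀ i j, (y.1 * x.1) i j = z.1 i j) :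
    MulOpposite.op x * MulOpposite.op y = MulOpposite.op z := by
  apply MulOpposite.unop_injective
  apply Subtype.ext
  ext i j
  · exact congrArg TrivSqZeroExt.fst (h i j)
  · exact congrArg TrivSqZeroExt.snd (h i j)

/-- Both `σ₁` and `σ₂` have infinite projective dimension as right
`A`-modules: for every natural number `n`, neither has projective dimension `≤ n`. -/
theorem sigma_infinite_projective_dimension (n : ℕ) :
    ¬ ProjDimLE (AAlg k)ᵐᵒᵖ n (Sigma1 k) ∧ ¬ ProjDimLE (AAlg k)ᵐᵒᵖ n (Sigma2 k) := by
  constructor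
  · intro hM
    obtain ⟨r, s, hrs⟩ := zprop_of_projDimLE _ _ _ (indep1 k)
      (mulA k _ _ 0 (by
        intro i j; fin_cases i <;> fin_cases j <;>
          simp [mkA, Matrix.mul_apply, Fin.sum_univ_two]))
      (mulA k _ _ _ (by
        intro i j; fin_cases i <;> fin_cases j <;>
          simp [mkA, Matrix.mul_apply, Fin.sum_univ_two])) n _ hM
      (show Sigma1 k from (1 : k)) (by
        rw [smul_sigma1]; exact zero_mul (1 : k))
    rw [smul_sigma1, smul_sigma1, smul_sigma1] at hrs
    have h2 : (1 : k) * 1 = 0 * (show k from r) + 0 * (show k from s) := hrs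
    rw [mul_one] at h2
    exact one_ne_zero (h2.trans (by
      rw [zero_mul (M₀ := k), zero_mul (M₀ := k), add_zero]))
  · intro hM
    obtain ⟨r, s, hrs⟩ := zprop_of_projDimLE _ _ _ (indep2 k)
      (mulA k _ _ 0 (by
        intro i j; fin_cases i <;> fin_cases j <;>
          simp [mkA, Matrix.mul_apply, Fin.sum_univ_two]))
      (mulA k _ _ _ (by
        intro i j; fin_cases i <;> fin_cases j <;>
          simp [mkA, Matrix.mul_apply, Fin.sum_univ_two])) n _ hM
      (show Sigma2 k from (1 : k)) (by
        rw [smul_sigma2]; exact zero_mul (1 : k))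
    rw [smul_sigma2, smul_sigma2, smul_sigma2] at hrs
    have h2 : (1 : k) * 1 = 0 * (show k from r) + 0 * (show k from s) := hrs
    rw [mul_one] at h2
    exact one_ne_zero (h2.trans (by
      rw [zero_mul (M₀ := k), zero_mul (M₀ := k), add_zero]))
end
end

section
/- For every natural number i, the k-vector space Ext^i_R(k_ψ, k_ψ) has dimension equal to the binomial coefficient C(n, i). In particular Ext^n_R(k_ψ, k_ψ) ≠ 0 and Ext^i_R(k_ψ, k_ψ) = 0 for i > n. -/
open CategoryTheory

noncomputable section

/-- The Laurent polynomial algebra `k[X₁^{±1}, …, Xₙ^{±1}]`, realized as the group algebra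
of the free abelian group `ℤⁿ` over `k`. -/
abbrev LaurentAlgebra (k : Type) [Field k] (n : ℕ) : Type :=
  AddMonoidAlgebra k (Fin n → ℤ)

/-- A minimal (with respect to `K`) free resolution of `M` with Koszul ranks `C(m, i)`. -/
structure KRes (R : Type) [CommRing R] (K : Type) [AddCommGroup K] [Module R K]
    (M : Type) [AddCommGroup M] [Module R M] (m : ℕ) where
  F : ℕ → ModuleCat.{0} R
  d : ∀ i, F (i + 1) →ₗ[R] F i
  e : F 0 →ₗ[R] M
  surj : Function.Surjective e
  ex0 : Function.Exact (d 0) e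
  ex : ∀ i, Function.Exact (d (i + 1)) (d i)
  free : ∀ i, Nonempty (F i ≃ₗ[R] (Fin (m.choose i) → R))
  minim : ∀ i (f : F i →ₗ[R] K), f ∘ₗ d i = 0

namespace KRes

variable {R : Type} [CommRing R] {K : Type} [AddCommGroup K] [Module R K]
    {M : Type} [AddCommGroup M] [Module R M] {m : ℕ}
    {N : Type} [AddCommGroup N] [Module R N]

def ofEquiv (A : KRes R K M m) (e : M ≃ₗ[R] N) : KRes R K N m where
  F := A.F
  d := A.d
  e := e.toLinearMap ∘ₗ A.e
  surj := e.surjective.comp A.surj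
  ex0 := fun x => by
    rw [← A.ex0 x]
    simp
  ex := A.ex
  free := A.free
  minim := A.minim

def baseF (R : Type) [CommRing R] : ℕ → ModuleCat.{0} R
  | 0 => ModuleCat.of R R
  | _ + 1 => ModuleCat.of R PUnit

theorem baseF_sub (i : ℕ) (x : baseF R (i + 1)) : x = 0 := rfl

def base : KRes R K R 0 where
  F := baseF R
  d := fun _ => 0
  e := LinearMap.id
  surj := Function.surjective_id
  ex0 := fun x => by
    constructor
    · intro h
      exact ⟨0, h.symm⟩
    · rintro ⟨y, rfl⟩
      rfl
  ex := fun i x => by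
    constructor
    · intro h
      exact ⟨0, rfl⟩
    · intro h
      rfl
  free := fun i => by
    cases i with
    | zero =>
      exact ⟨(LinearEquiv.funUnique (Fin 1) R R).symm⟩
    | succ i =>
      have : Subsingleton (Fin (Nat.choose 0 (i + 1)) → R) := by
        rw [Nat.choose_zero_succ]; infer_instance
      exact ⟨{ (0 : baseF R (i + 1) →ₗ[R] (Fin (Nat.choose 0 (i + 1)) → R)) with
        invFun := fun _ => 0
        left_inv := fun _ => rfl
        right_inv := fun _ => Subsingleton.elim _ _ }⟩
  minim := fun i f => by simp

def coneF (F : ℕ → ModuleCat.{0} R) : ℕ → ModuleCat.{0} R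
  | 0 => F 0
  | i + 1 => ModuleCat.of R (F (i + 1) × F i)

def coneD (F : ℕ → ModuleCat.{0} R) (d : ∀ i, F (i + 1) →ₗ[R] F i) (y : R) :
    ∀ i, coneF F (i + 1) →ₗ[R] coneF F i
  | 0 => LinearMap.coprod (d 0) (y • LinearMap.id)
  | i + 1 => LinearMap.prod (LinearMap.coprod (d (i + 1)) (y • LinearMap.id))
      (- (d i ∘ₗ LinearMap.snd R (F (i + 2)) (F (i + 1))))

theorem coneD_zero (F : ℕ → ModuleCat.{0} R) (d : ∀ i, F (i + 1) →ₗ[R] F i) (y : R)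
    (a : F 1) (b : F 0) : coneD F d y 0 (a, b) = (d 0 a + y • b : F 0) := rfl

theorem coneD_succ (F : ℕ → ModuleCat.{0} R) (d : ∀ i, F (i + 1) →ₗ[R] F i) (y : R) (i : ℕ)
    (a : F (i + 2)) (b : F (i + 1)) :
    coneD F d y (i + 1) (a, b) = ((d (i + 1) a + y • b, - d i b) : F (i + 1) × F i) := rfl

def cone (A : KRes R K M m) (y : R) (p : M →ₗ[R] N) (hp : Function.Surjective p)
    (hker : ∀ x, p x = 0 ↔ ∃ z, x = y • z) (hy : ∀ x : M, y • x = 0 → x = 0)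
    (hK : ∀ v : K, y • v = 0) : KRes R K N (m + 1) where
  F := coneF A.F
  d := coneD A.F A.d y
  e := p ∘ₗ A.e
  surj := hp.comp A.surj
  ex0 := by
    intro (x : A.F 0)
    change p (A.e x) = 0 ↔ _
    rw [hker]
    constructor
    · rintro ⟨z, hz⟩
      obtain ⟨b, rfl⟩ := A.surj z
      have : A.e (x - y • b) = 0 := by rw [map_sub, map_smul, hz, sub_self]
      obtain ⟨a, ha⟩ := (A.ex0 _).1 this
      exact ⟨((a, b) : A.F 1 × A.F 0), by
        rw [coneD_zero, ha]; exact sub_add_cancel _ _⟩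
    · rintro ⟨⟨a, b⟩, rfl⟩
      refine ⟨A.e b, ?_⟩
      rw [coneD_zero]
      erw [map_add]
      rw [map_smul, (A.ex0 (A.d 0 a)).2 ⟨a, rfl⟩, zero_add]
  ex := by
    intro i
    have key : ∀ i (b : A.F (i + 1)), (∃ c, A.d (i + 1) c = b) ↔ A.d i b = 0 :=
      fun i b => (A.ex i b).symm
    cases i with
    | zero =>
      rintro ⟨a, b⟩
      rw [coneD_zero]
      constructor
      · intro h
        have h : A.d 0 a + y • b = 0 := h
        have h1 : y • A.e b = 0 := by
          have := congrArg A.e h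
          rwa [map_add, map_smul, (A.ex0 (A.d 0 a)).2 ⟨a, rfl⟩, zero_add, map_zero] at this
        obtain ⟨c, rfl⟩ := (A.ex0 _).1 (hy _ h1)
        rw [← map_smul, ← map_add, ← key] at h
        obtain ⟨f, hf⟩ := h
        refine ⟨((f, -c) : A.F 2 × A.F 1), ?_⟩
        rw [coneD_succ]
        refine Prod.ext ?_ ?_
        · change A.d 1 f + y • (-c) = a
          rw [hf, smul_neg]; abel
        · change - A.d 0 (-c) = A.d 0 c
          rw [map_neg, neg_neg]
      · rintro ⟨⟨f, c⟩, h⟩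
        rw [coneD_succ] at h
        have h1 : A.d 1 f + y • c = a := congrArg Prod.fst h
        have h2 : - A.d 0 c = b := congrArg Prod.snd h
        change A.d 0 a + y • b = 0
        rw [← h1, ← h2, map_add, (key 0 (A.d 1 f)).1 ⟨f, rfl⟩, map_smul, smul_neg]
        abel
    | succ i =>
      rintro ⟨a, b⟩
      rw [coneD_succ]
      constructor
      · intro h
        have h1 : A.d (i + 1) a + y • b = 0 := congrArg Prod.fst h
        have h2 : - A.d i b = 0 := congrArg Prod.snd h
        rw [neg_eq_zero, ← key] at h2
        obtain ⟨c, rfl⟩ := h2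
        rw [← map_smul, ← map_add, ← key] at h1
        obtain ⟨f, hf⟩ := h1
        refine ⟨((f, -c) : A.F (i + 3) × A.F (i + 2)), ?_⟩
        rw [coneD_succ]
        refine Prod.ext ?_ ?_
        · change A.d (i + 2) f + y • (-c) = a
          rw [hf, smul_neg]; abel
        · change - A.d (i + 1) (-c) = A.d (i + 1) c
          rw [map_neg, neg_neg]
      · rintro ⟨⟨f, c⟩, h⟩
        rw [coneD_succ] at h
        have h1 : A.d (i + 2) f + y • c = a := congrArg Prod.fst h
        have h2 : - A.d (i + 1) c = b := congrArg Prod.snd h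
        refine Prod.ext ?_ ?_
        · change A.d (i + 1) a + y • b = 0
          rw [← h1, ← h2, map_add, (key (i + 1) (A.d (i + 2) f)).1 ⟨f, rfl⟩, map_smul, smul_neg]
          abel
        · change - A.d i b = 0
          rw [← h2, map_neg, (key i (A.d (i + 1) c)).1 ⟨c, rfl⟩, neg_zero, neg_zero]
  free := by
    intro i
    cases i with
    | zero =>
      have := A.free 0
      rw [Nat.choose_zero_right] at this ⊢
      exact this
    | succ i =>
      obtain ⟨f⟩ := A.free (i + 1)
      obtain ⟨g⟩ := A.free i
      rw [Nat.choose_succ_succ, add_comm (m.choose i)]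
      exact ⟨(f.prodCongr g).trans ((LinearEquiv.sumArrowLequivProdArrow _ _ R R).symm.trans
        (LinearEquiv.funCongrLeft R R finSumFinEquiv.symm))⟩
  minim := by
    intro i f
    cases i with
    | zero =>
      refine LinearMap.ext ?_
      rintro ⟨a, b⟩
      change f (coneD A.F A.d y 0 (a, b)) = 0
      rw [coneD_zero]
      erw [map_add f]
      have h1 : f (A.d 0 a) = 0 := LinearMap.congr_fun (A.minim 0 f) a
      erw [h1, map_smul f]
      rw [hK, zero_add]
    | succ i =>
      refine LinearMap.ext ?_
      rintro ⟨a, b⟩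
      change f (coneD A.F A.d y (i + 1) (a, b)) = 0
      rw [coneD_succ]
      let f1 : A.F (i + 1) →ₗ[R] K := f ∘ₗ LinearMap.inl R (A.F (i + 1)) (A.F i)
      let f2 : A.F i →ₗ[R] K := f ∘ₗ LinearMap.inr R (A.F (i + 1)) (A.F i)
      have hf : ∀ (a : A.F (i + 1)) (b : A.F i),
          f ((a, b) : A.F (i + 1) × A.F i) = f1 a + f2 b := by
        intro a b
        have : ((a, b) : A.F (i + 1) × A.F i) = (a, 0) + (0, b) := by simp
        rw [this]
        exact map_add f _ _
      rw [hf]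
      have h1 : f1 (A.d (i + 1) a) = 0 := LinearMap.congr_fun (A.minim (i + 1) f1) a
      have h2 : f2 (A.d i b) = 0 := LinearMap.congr_fun (A.minim i f2) b
      rw [map_add, map_neg, h1, h2, map_smul, hK, add_zero, neg_zero, add_zero]

end KRes
namespace KRes

variable {R : Type} [CommRing R] {K : Type} [AddCommGroup K] [Module R K] {m : ℕ}

def cplx (A : KRes R K K m) : ChainComplex (ModuleCat.{0} R) ℕ :=
  ChainComplex.of A.F (fun i => ModuleCat.ofHom (A.d i)) (fun i => by
    ext x
    exact (A.ex i (A.d (i + 1) x)).2 ⟨x, rfl⟩)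

theorem cplx_d (A : KRes R K K m) (i : ℕ) :
    A.cplx.d (i + 1) i = ModuleCat.ofHom (A.d i) := by
  unfold cplx; simp

def cplxπ (A : KRes R K K m) :
    A.cplx ⟶ (ChainComplex.single₀ (ModuleCat.{0} R)).obj (ModuleCat.of R K) :=
  (ChainComplex.toSingle₀Equiv _ _).symm ⟨ModuleCat.ofHom A.e, by
    rw [cplx_d]
    ext x
    exact (A.ex0 (A.d 0 x)).2 ⟨x, rfl⟩⟩

theorem cplxπ_f (A : KRes R K K m) : A.cplxπ.f 0 = ModuleCat.ofHom A.e :=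
  ChainComplex.toSingle₀Equiv_symm_apply_f_zero _ _

theorem quasi (A : KRes R K K m) : QuasiIso A.cplxπ where
  quasiIsoAt n := by
    cases n with
    | zero =>
      rw [ChainComplex.quasiIsoAt₀_iff, ShortComplex.quasiIso_iff_of_zeros' _ rfl rfl rfl]
      constructor
      · rw [ShortComplex.ShortExact.moduleCat_exact_iff_function_exact]
        change Function.Exact (A.cplx.d 1 0) (A.cplxπ.f 0)
        rw [cplx_d, cplxπ_f]
        exact A.ex0
      · change Epi (A.cplxπ.f 0)
        rw [cplxπ_f]
        exact (ModuleCat.epi_iff_surjective (ModuleCat.ofHom A.e)).2 A.surj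
    | succ n =>
      rw [quasiIsoAt_iff_exactAt' (hL := ChainComplex.exactAt_succ_single_obj ..),
          HomologicalComplex.exactAt_iff' _ (n + 2) (n + 1) n (by simp) (by simp)]
      rw [ShortComplex.ShortExact.moduleCat_exact_iff_function_exact]
      change Function.Exact (A.cplx.d (n + 2) (n + 1)) (A.cplx.d (n + 1) n)
      rw [cplx_d, cplx_d]
      exact A.ex n

def res (A : KRes R K K m) : ProjectiveResolution (ModuleCat.of R K) where
  complex := A.cplx
  projective n := by
    change Projective (A.F n)
    obtain ⟨f⟩ := A.free n
    have : Module.Projective R (A.F n) := Module.Projective.of_equiv f.symm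
    infer_instance
  π := A.cplxπ
  quasiIso := A.quasi

theorem extIso (k : Type) [Field k] [Algebra k R] (A : KRes R K K m) (i : ℕ) :
    Nonempty ((((Ext k (ModuleCat R) i).obj (Opposite.op (ModuleCat.of R K))).obj
      (ModuleCat.of R K)) ≃ₗ[k] (A.F i ⟶ ModuleCat.of R K)) := by
  let C := A.res.complex.linearYonedaObj k (ModuleCat.of R K)
  have hd : ∀ i j, C.d i j = 0 := by
    intro i j
    by_cases h : i + 1 = j
    · subst h
      ext f
      change A.cplx.d (i + 1) i ≫ f = 0
      rw [cplx_d]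
      ext x
      exact LinearMap.congr_fun (A.minim i (ModuleCat.Hom.hom f)) x
    · exact C.shape _ _ h
  let e : C.homology i ≅ C.X i :=
    (C.isoHomologyπ _ i rfl (hd _ _)).symm ≪≫ (C.iCyclesIso i _ rfl (hd _ _))
  exact ⟨(A.res.isoExt i (ModuleCat.of R K) ≪≫ e).toLinearEquiv⟩

theorem homEquiv (k : Type) [Field k] [Algebra k R] [Module R k]
    (hk : ∀ (c v : k), algebraMap k R c • v = c * v) (X : ModuleCat.{0} R) (c : ℕ)
    (g : X ≃ₗ[R] (Fin c → R)) :
    Nonempty ((X ⟶ ModuleCat.of R k) ≃ₗ[k] (Fin c → k)) := by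
  let b := Module.Basis.ofEquivFun g
  let e : (X ⟶ ModuleCat.of R k) ≃+ (Fin c → k) :=
    ModuleCat.homAddEquiv.trans (b.constr ℕ).symm.toAddEquiv
  refine ⟨{ e with map_smul' := fun a f => ?_ }⟩
  funext j
  exact hk a (f.hom (b j))

theorem final (k : Type) [Field k] [Algebra k R] [Module R k]
    (hk : ∀ (c v : k), algebraMap k R c • v = c * v) (A : KRes R k k m) (i : ℕ) :
    Nonempty ((((Ext k (ModuleCat R) i).obj (Opposite.op (ModuleCat.of R k))).obj
      (ModuleCat.of R k)) ≃ₗ[k] (Fin (m.choose i) → k)) := by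
  obtain ⟨g⟩ := A.free i
  obtain ⟨e⟩ := A.extIso k i
  obtain ⟨f⟩ := homEquiv k hk (A.F i) _ g
  exact ⟨e.trans f⟩

end KRes

namespace LaurentExt

open AddMonoidAlgebra

variable {k : Type} [Field k] {n : ℕ}

/-- The part of an exponent vector supported on the indices `≥ j`. -/
def hi (j : ℕ) (a : Fin n → ℤ) : Fin n → ℤ := fun i => if (i : ℕ) < j then 0 else a i

/-- The part of an exponent vector supported on the indices `< j`. -/
def lo (j : ℕ) (a : Fin n → ℤ) : Fin n → ℤ := fun i => if (i : ℕ) < j then a i else 0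

/-- A monomial. -/
def X (k : Type) [Field k] {n : ℕ} (a : Fin n → ℤ) : LaurentAlgebra k n := single a 1

theorem X_add (a b : Fin n → ℤ) : X k (a + b) = X k a * X k b := by
  simp [X, single_mul_single]

theorem X_zero : X k (0 : Fin n → ℤ) = 1 := rfl

theorem single_eq (a : Fin n → ℤ) (c : k) : (single a c : LaurentAlgebra k n) = c • X k a := by
  simp [X]

variable (ψ : LaurentAlgebra k n →ₐ[k] k)

def phi (j : ℕ) : LaurentAlgebra k n →ₐ[k] LaurentAlgebra k n :=
  AddMonoidAlgebra.lift k (LaurentAlgebra k n) (Fin n → ℤ)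
    { toFun := fun a => ψ (X k (lo j a.toAdd)) • X k (hi j a.toAdd)
      map_one' := by
        have h1 : lo j (0 : Fin n → ℤ) = 0 := by funext i; simp [lo]
        have h2 : hi j (0 : Fin n → ℤ) = 0 := by funext i; simp [hi]
        simp [h1, h2, X_zero]
      map_mul' := fun a b => by
        have h1 : lo j (a.toAdd + b.toAdd) = lo j a.toAdd + lo j b.toAdd := by
          funext i; simp only [lo, Pi.add_apply]; split_ifs <;> simp
        have h2 : hi j (a.toAdd + b.toAdd) = hi j a.toAdd + hi j b.toAdd := by
          funext i; simp only [hi, Pi.add_apply]; split_ifs <;> simp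
        rw [toAdd_mul, h1, h2, X_add, X_add, map_mul, smul_mul_smul_comm] }

theorem phi_X (j : ℕ) (a : Fin n → ℤ) :
    phi ψ j (X k a) = ψ (X k (lo j a)) • X k (hi j a) := by
  rw [phi, X, lift_single, one_smul]; rfl

theorem ind {P : LaurentAlgebra k n → Prop} (f : LaurentAlgebra k n) (h0 : P 0)
    (hX : ∀ a, P (X k a))
    (hadd : ∀ f g, P f → P g → P (f + g)) (hs : ∀ (c : k) f, P f → P (c • f)) : P f := by
  induction f using AddMonoidAlgebra.induction_linear with
  | zero => exact h0
  | add f g hf hg => exact hadd f g hf hg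
  | single a c => rw [single_eq]; exact hs _ _ (hX a)

theorem phi_comp {i j : ℕ} (hij : i ≤ j) (f : LaurentAlgebra k n) :
    phi ψ j (phi ψ i f) = phi ψ j f := by
  induction f using ind with
  | h0 => simp
  | hadd f g hf hg => simp only [map_add, hf, hg]
  | hs c f hf => simp only [map_smul, hf]
  | hX a =>
    have h1 : hi j (hi i a) = hi j a := by
      funext l; simp only [hi]; split_ifs <;> first | rfl | omega
    have h2 : lo j a = lo i a + lo j (hi i a) := by
      funext l; simp only [hi, lo, Pi.add_apply]; split_ifs <;> omega
    rw [phi_X, map_smul, phi_X, phi_X, h1, h2, X_add, map_mul, smul_smul]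

theorem phi_zero (f : LaurentAlgebra k n) : phi ψ 0 f = f := by
  induction f using ind with
  | h0 => simp
  | hadd f g hf hg => simp only [map_add, hf, hg]
  | hs c f hf => simp only [map_smul, hf]
  | hX a =>
    have h1 : hi 0 a = a := by funext l; simp [hi]
    have h2 : lo 0 a = 0 := by funext l; simp [lo]
    rw [phi_X, h1, h2, X_zero, map_one, one_smul]

theorem phi_last (f : LaurentAlgebra k n) : phi ψ n f = ψ f • 1 := by
  induction f using ind with
  | h0 => simp
  | hadd f g hf hg => simp only [map_add, hf, hg, add_smul]
  | hs c f hf => simp only [map_smul, hf, smul_assoc]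
  | hX a =>
    have h1 : hi n a = 0 := by funext l; simp [hi]
    have h2 : lo n a = a := by funext l; simp [lo]
    rw [phi_X, h1, h2, X_zero]

/-- The element `X_j - ψ(X_j)`. -/
def y (j : Fin n) : LaurentAlgebra k n := X k (Pi.single j 1) - ψ (X k (Pi.single j 1)) • 1

theorem psi_y (j : Fin n) : ψ (y ψ j) = 0 := by
  simp [y]

theorem phi_succ_y (j : Fin n) : phi ψ (j + 1) (y ψ j) = 0 := by
  have h1 : hi (j + 1) (Pi.single j 1 : Fin n → ℤ) = 0 := by
    funext l
    simp only [hi, Pi.single_apply, Pi.zero_apply]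
    split_ifs <;> first | rfl | (subst_vars; omega)
  have h2 : lo (j + 1) (Pi.single j 1 : Fin n → ℤ) = Pi.single j 1 := by
    funext l
    simp only [lo, Pi.single_apply]
    split_ifs <;> first | rfl | (subst_vars; omega)
  rw [y, map_sub, phi_X, map_smul, map_one, h1, h2, X_zero, sub_self]

theorem phi_y (j : Fin n) : phi ψ j (y ψ j) ≠ 0 := by
  have h1 : hi j (Pi.single j 1 : Fin n → ℤ) = Pi.single j 1 := by
    funext l
    simp only [hi, Pi.single_apply]
    split_ifs <;> first | rfl | (subst_vars; omega)
  have h2 : lo j (Pi.single j 1 : Fin n → ℤ) = 0 := by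
    funext l
    simp only [lo, Pi.single_apply, Pi.zero_apply]
    split_ifs <;> first | rfl | (subst_vars; omega)
  rw [y, map_sub, phi_X, map_smul, map_one, h1, h2, X_zero, map_one, one_smul, sub_ne_zero]
  intro h
  rw [← X_zero, ← single_eq, X] at h
  have := congrArg (fun f : LaurentAlgebra k n => f.coeff (Pi.single j 1)) h
  simp [Finsupp.single_apply] at this

theorem dvd_neg_of (z : LaurentAlgebra k n) (u : Fin n → ℤ) (h : z ∣ X k u - ψ (X k u) • 1) :
    z ∣ X k (-u) - ψ (X k (-u)) • 1 := by
  have e1 : X k u * X k (-u) = 1 := by rw [← X_add, add_neg_cancel, X_zero]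
  have e2 : ψ (X k u) * ψ (X k (-u)) = 1 := by rw [← map_mul, e1, map_one]
  have : X k (-u) - ψ (X k (-u)) • 1
      = (X k u - ψ (X k u) • 1) * (- (ψ (X k (-u)) • X k (-u))) := by
    rw [sub_mul, mul_neg, mul_neg, mul_smul_comm, e1, smul_mul_smul_comm, e2]
    simp only [one_mul, one_smul]
    abel
  rw [this]
  exact Dvd.dvd.mul_right h _

theorem dvd_add_of (z : LaurentAlgebra k n) (u v : Fin n → ℤ) (h : z ∣ X k u - ψ (X k u) • 1)
    (h' : z ∣ X k v - ψ (X k v) • 1) :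
    z ∣ X k (u + v) - ψ (X k (u + v)) • 1 := by
  have : X k (u + v) - ψ (X k (u + v)) • 1
      = (X k u - ψ (X k u) • 1) * X k v + (X k v - ψ (X k v) • 1) * (ψ (X k u) • 1) := by
    rw [X_add, map_mul]
    simp only [Algebra.smul_def, map_mul]
    ring
  rw [this]
  exact dvd_add (Dvd.dvd.mul_right h _) (Dvd.dvd.mul_right h' _)

theorem y_dvd (j : Fin n) (m : ℤ) :
    y ψ j ∣ X k (Pi.single j m) - ψ (X k (Pi.single j m)) • 1 := by
  have h1 : y ψ j ∣ X k (Pi.single j 1) - ψ (X k (Pi.single j 1)) • 1 := dvd_refl _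
  induction m using Int.induction_on with
  | zero => simp [X_zero]
  | succ m ih =>
    rw [Pi.single_add]
    exact dvd_add_of ψ _ _ _ ih h1
  | pred m ih =>
    rw [show (-(m : ℤ) - 1) = -(m : ℤ) + -1 from rfl, Pi.single_add, show (Pi.single j (-1) : Fin n → ℤ) = - Pi.single j 1 from Pi.single_neg _ _]
    exact dvd_add_of ψ _ _ _ ih (dvd_neg_of ψ _ _ h1)

theorem phi_sub (j : Fin n) (f : LaurentAlgebra k n) :
    y ψ j ∣ phi ψ j f - phi ψ (j + 1) f := by
  induction f using ind with
  | h0 => simp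
  | hadd f g hf hg =>
    have : phi ψ j (f + g) - phi ψ (j + 1) (f + g)
      = (phi ψ j f - phi ψ (j + 1) f) + (phi ψ j g - phi ψ (j + 1) g) := by
      simp only [map_add]; abel
    rw [this]
    exact dvd_add hf hg
  | hs c f hf =>
    rw [map_smul, map_smul, ← smul_sub, Algebra.smul_def]
    exact Dvd.dvd.mul_left hf _
  | hX a =>
    have h1 : hi j a = hi (j + 1) a + Pi.single j (a j) := by
      funext l
      simp only [hi, Pi.add_apply, Pi.single_apply]
      split_ifs <;> first | (subst_vars; simp; done) | (exfalso; grind)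
    have h2 : lo (j + 1) a = lo j a + Pi.single j (a j) := by
      funext l
      simp only [lo, Pi.add_apply, Pi.single_apply]
      split_ifs <;> first | (subst_vars; simp; done) | (exfalso; grind)
    rw [phi_X, phi_X, h1, h2]
    have : ψ (X k (lo j a)) • X k (hi (j + 1) a + Pi.single j (a j))
        - ψ (X k (lo j a + Pi.single j (a j))) • X k (hi (j + 1) a)
      = (X k (Pi.single j (a j)) - ψ (X k (Pi.single j (a j))) • 1) *
        (ψ (X k (lo j a)) • X k (hi (j + 1) a)) := by
      rw [X_add, X_add, map_mul]
      simp only [Algebra.smul_def, map_mul]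
      ring
    rw [this]
    exact Dvd.dvd.mul_right (y_dvd ψ j _) _

/-- The ideal `I_j`. -/
def I (j : ℕ) : Ideal (LaurentAlgebra k n) := RingHom.ker (phi ψ j)

theorem mem_I (j : ℕ) (f : LaurentAlgebra k n) : f ∈ I ψ j ↔ phi ψ j f = 0 := RingHom.mem_ker

theorem I_le (j : ℕ) : I ψ j ≤ I ψ (j + 1) := by
  intro f hf
  rw [mem_I] at hf ⊢
  rw [← phi_comp ψ (Nat.le_succ j), hf, map_zero]

theorem mem_I_succ (j : Fin n) (f : LaurentAlgebra k n) :
    f ∈ I ψ (j + 1) ↔ ∃ g, f - y ψ j * g ∈ I ψ j := by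
  constructor
  · intro hf
    obtain ⟨g, hg⟩ := phi_sub ψ j f
    refine ⟨g, ?_⟩
    rw [mem_I] at hf ⊢
    rw [← hg, hf, sub_zero, map_sub, phi_comp ψ le_rfl, sub_self]
  · rintro ⟨g, hg⟩
    have h := I_le ψ j hg
    rw [mem_I] at h ⊢
    rw [map_sub, map_mul, phi_succ_y, zero_mul, sub_zero] at h
    exact h

theorem ladder [Module (LaurentAlgebra k n) k] (h : ∀ (r : LaurentAlgebra k n) (v : k),
    r • v = ψ r * v) (j : ℕ) (hj : j ≤ n) :
    Nonempty (KRes (LaurentAlgebra k n) k (LaurentAlgebra k n ⧸ I ψ j) j) := by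
  induction j with
  | zero =>
    have h0 : I ψ 0 = ⊥ := by
      ext f
      rw [mem_I, phi_zero, Ideal.mem_bot]
    exact ⟨KRes.base.ofEquiv (Submodule.quotEquivOfEqBot (I ψ 0) h0).symm⟩
  | succ j ih =>
    obtain ⟨A⟩ := ih (by omega)
    let j' : Fin n := ⟨j, by omega⟩
    refine ⟨A.cone (y ψ j') (Submodule.factor (I_le ψ j))
      (Submodule.factor_surjective (I_le ψ j)) ?_ ?_ ?_⟩
    · intro x
      obtain ⟨f, rfl⟩ := Submodule.mkQ_surjective _ x
      rw [Submodule.factor_mk, Submodule.mkQ_apply, Submodule.mkQ_apply,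
        Submodule.Quotient.mk_eq_zero]
      refine (mem_I_succ ψ j' f).trans ?_
      constructor
      · rintro ⟨g, hg⟩
        refine ⟨Submodule.Quotient.mk g, ?_⟩
        rw [← Submodule.Quotient.mk_smul, Submodule.Quotient.eq]
        exact hg
      · rintro ⟨z, hz⟩
        obtain ⟨g, rfl⟩ := Submodule.mkQ_surjective _ z
        refine ⟨g, ?_⟩
        rw [Submodule.mkQ_apply, ← Submodule.Quotient.mk_smul, Submodule.Quotient.eq] at hz
        exact hz
    · intro x
      obtain ⟨f, rfl⟩ := Submodule.mkQ_surjective _ x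
      rw [Submodule.mkQ_apply, ← Submodule.Quotient.mk_smul, Submodule.Quotient.mk_eq_zero,
        Submodule.Quotient.mk_eq_zero, smul_eq_mul, mem_I, mem_I, map_mul]
      intro hf
      exact (mul_eq_zero.1 hf).resolve_left (phi_y ψ j')
    · intro v
      rw [h, psi_y, zero_mul]

theorem top [Module (LaurentAlgebra k n) k] (h : ∀ (r : LaurentAlgebra k n) (v : k),
    r • v = ψ r * v) : Nonempty (KRes (LaurentAlgebra k n) k k n) := by
  obtain ⟨A⟩ := ladder ψ h n le_rfl
  let p : LaurentAlgebra k n →ₗ[LaurentAlgebra k n] k := LinearMap.toSpanSingleton _ _ 1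
  have hp : ∀ f, p f = ψ f := fun f => by
    change f • (1 : k) = _
    rw [h, mul_one]
  have hs : Function.Surjective p := fun c => ⟨algebraMap k _ c, by
    rw [hp, AlgHom.commutes]; rfl⟩
  have hI : I ψ n = LinearMap.ker p := by
    ext f
    rw [mem_I, phi_last, LinearMap.mem_ker, hp]
    simp
  exact ⟨A.ofEquiv ((Submodule.quotEquivOfEq _ _ hI).trans (p.quotKerEquivOfSurjective hs))⟩

end LaurentExt

/-- Let `k` be a field, `n` a natural number, `R = k[X₁^{±1}, …, Xₙ^{±1}]`,
and `ψ : R → k` a `k`-algebra homomorphism; let `k_ψ` be the one-dimensional `R`-module `k`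
with `R` acting through `ψ`.  Then for every `i`, the `k`-vector space `Ext^i_R(k_ψ, k_ψ)`
has dimension `C(n, i)`; in particular `Ext^n_R(k_ψ, k_ψ) ≠ 0`, and `Ext^i_R(k_ψ, k_ψ) = 0`
for `i > n`. -/
theorem ext_laurent_character_dim_choose (k : Type) [Field k] (n : ℕ)
    (ψ : LaurentAlgebra k n →ₐ[k] k) :
    letI : Module (LaurentAlgebra k n) k := Module.compHom k ψ.toRingHom
    (∀ i : ℕ,
      Nonempty
        ((((Ext k (ModuleCat (LaurentAlgebra k n)) i).obj
            (Opposite.op (ModuleCat.of (LaurentAlgebra k n) k))).obj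
          (ModuleCat.of (LaurentAlgebra k n) k)) ≃ₗ[k] (Fin (n.choose i) → k))) ∧
    Nontrivial
      (((Ext k (ModuleCat (LaurentAlgebra k n)) n).obj
          (Opposite.op (ModuleCat.of (LaurentAlgebra k n) k))).obj
        (ModuleCat.of (LaurentAlgebra k n) k)) ∧
    (∀ i : ℕ, n < i →
      Subsingleton
        (((Ext k (ModuleCat (LaurentAlgebra k n)) i).obj
            (Opposite.op (ModuleCat.of (LaurentAlgebra k n) k))).obj
          (ModuleCat.of (LaurentAlgebra k n) k))) := by
  letI : Module (LaurentAlgebra k n) k := Module.compHom k ψ.toRingHom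
  obtain ⟨A⟩ := LaurentExt.top ψ (fun _ _ => rfl)
  have main := A.final k (fun c v => by
    change ψ (algebraMap k _ c) * v = c * v
    rw [AlgHom.commutes]; rfl)
  refine ⟨main, ?_, ?_⟩
  · obtain ⟨e⟩ := main n
    rw [Nat.choose_self] at e
    exact e.toEquiv.nontrivial
  · intro i hi
    obtain ⟨e⟩ := main i
    rw [Nat.choose_eq_zero_of_lt hi] at e
    exact e.toEquiv.subsingleton
end
end

section
/- The module k_ψ has projective dimension exactly n over R: it has projective dimension ≤ n, and does not have projective dimension ≤ n − 1 when n ≥ 1. -/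
section PD
open CategoryTheory Abelian Module RingTheory.Sequence

theorem projDimLE_iff {R : Type} [Ring R] (n : ℕ) (M : Type) [AddCommGroup M] [Module R M] :
    ProjDimLE R n M ↔ HasProjectiveDimensionLE (ModuleCat.of R M) n := by
  induction n generalizing M with
  | zero =>
    rw [ProjDimLE, ← projective_iff_hasProjectiveDimensionLE_zero, IsProjective.iff_projective]
  | succ n ih =>
    rw [ProjDimLE]
    constructor
    · rintro ⟨P, _, _, f, hP, hf, hk⟩
      have hS := LinearMap.shortExact_shortComplexKer hf
      have hP' : CategoryTheory.Projective (ModuleCat.of R P) := (IsProjective.iff_projective P).1 hP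
      exact (hS.hasProjectiveDimensionLT_X₃_iff n hP').2 ((ih _).1 hk)
    · intro h
      have hf : Function.Surjective (Finsupp.linearCombination R (id : M → M)) :=
        Finsupp.linearCombination_id_surjective R M
      have hS := LinearMap.shortExact_shortComplexKer hf
      refine ⟨M →₀ R, inferInstance, inferInstance, _, inferInstance, hf, (ih _).2 ?_⟩
      have hP' : CategoryTheory.Projective (ModuleCat.of R (M →₀ R)) :=
        (IsProjective.iff_projective _).1 inferInstance
      exact (hS.hasProjectiveDimensionLT_X₃_iff n hP').1 h

theorem ext_step {R : Type} [CommRing R] (M N : ModuleCat.{0} R) (x : R) (reg : IsSMulRegular M x)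
    (hN : ∀ y : N, x • y = 0) (i : ℕ) (h : Nontrivial (Ext M N i)) :
    Nontrivial (Ext (ModuleCat.of R (QuotSMulTop x M)) N (i + 1)) := by
  have hS : (M.smulShortComplex x).ShortExact := reg.smulShortComplex_shortExact
  obtain ⟨e, he⟩ := exists_ne (0 : Ext M N i)
  refine ⟨hS.extClass.comp (show Ext (M.smulShortComplex x).X₁ N i from e) (add_comm 1 i), 0, fun h0 => he ?_⟩
  obtain ⟨z, hz⟩ := Ext.contravariant_sequence_exact₁ hS N
    (show Ext (M.smulShortComplex x).X₁ N i from e) (add_comm 1 i) h0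
  rw [← hz]
  have hf : (M.smulShortComplex x).f = x • 𝟙 M := rfl
  have hz' : (Ext.mk₀ (x • 𝟙 M)).comp (show Ext M N i from z) (zero_add i) = 0 := by
    rw [Ext.mk₀_smul, Ext.smul_comp, Ext.mk₀_id_comp, ← Ext.comp_mk₀_id (show Ext M N i from z),
      ← Ext.comp_smul, ← Ext.mk₀_smul]
    have : x • 𝟙 N = 0 := by
      ext y; exact hN y
    rw [this, Ext.mk₀_zero, Ext.comp_zero]
  exact hz'

theorem pd_list {R : Type} [CommRing R] (rs : List R) (M N : ModuleCat.{0} R)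
    (reg : IsWeaklyRegular M rs)
    (hN : ∀ x ∈ rs, ∀ y : N, x • y = 0) (i : ℕ) (hpd : HasProjectiveDimensionLE M i)
    (h : Nontrivial (Ext M N i)) :
    HasProjectiveDimensionLE
      (ModuleCat.of R (M ⧸ Ideal.ofList rs • (⊤ : Submodule R M))) (i + rs.length) ∧
    Nontrivial (Ext (ModuleCat.of R (M ⧸ Ideal.ofList rs • (⊤ : Submodule R M))) N
      (i + rs.length)) := by
  have key : ∀ {A B : ModuleCat.{0} R} (e : A ≅ B) (j : ℕ), Nontrivial (Ext A N j) →
      Nontrivial (Ext B N j) := by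
    intro A B e j hA
    obtain ⟨a, ha⟩ := exists_ne (0 : Ext A N j)
    refine ⟨(Ext.mk₀ e.inv).comp a (zero_add j), 0, fun h0 => ha ?_⟩
    have := congrArg (fun t => (Ext.mk₀ e.hom).comp t (zero_add j)) h0
    simpa using this
  induction rs generalizing M i with
  | nil =>
    have e : M ≅ ModuleCat.of R (M ⧸ Ideal.ofList ([] : List R) • (⊤ : Submodule R M)) :=
      (Submodule.quotEquivOfEqBot _ (by simp)).symm.toModuleIso
    exact ⟨hasProjectiveDimensionLT_of_iso e _, key e _ h⟩
  | cons x rs ih =>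
    rw [isWeaklyRegular_cons_iff] at reg
    have e := (Submodule.quotOfListConsSMulTopEquivQuotSMulTopInner M x rs).symm.toModuleIso
    have hS : (M.smulShortComplex x).ShortExact := reg.1.smulShortComplex_shortExact
    have h1 : HasProjectiveDimensionLE (ModuleCat.of R (QuotSMulTop x M)) (i + 1) :=
      hS.hasProjectiveDimensionLT_X₃ (i + 1) hpd
        (hasProjectiveDimensionLT_of_ge M (i + 1) (i + 2) (Nat.le_add_right _ 1))
    have h2 := ext_step M N x reg.1 (hN x (by simp)) i h
    obtain ⟨h3, h4⟩ := ih (ModuleCat.of R (QuotSMulTop x M)) reg.2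
      (fun y hy => hN y (by simp [hy])) (i + 1) h1 h2
    rw [List.length_cons, show i + (rs.length + 1) = i + 1 + rs.length by omega]
    exact ⟨hasProjectiveDimensionLT_of_iso e _, key e _ h4⟩
end PD

section Alg
open CategoryTheory Abelian Module RingTheory.Sequence

variable {k : Type} [Field k] {n : ℕ}

/-- The monomial with exponent `a`. -/
noncomputable def lmon (a : Fin n → ℤ) : LaurentAlgebra k n := AddMonoidAlgebra.single a 1

theorem lmon_add (a b : Fin n → ℤ) :
    (lmon (a + b) : LaurentAlgebra k n) = lmon a * lmon b := by
  simp [lmon, AddMonoidAlgebra.single_mul_single]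

theorem lmon_zero : (lmon 0 : LaurentAlgebra k n) = 1 := rfl

/-- The generator `X_i - ψ(X_i)`. -/
noncomputable def lgen (ψ : LaurentAlgebra k n →ₐ[k] k) (i : Fin n) : LaurentAlgebra k n :=
  lmon (Pi.single i 1) - algebraMap k _ (ψ (lmon (Pi.single i 1)))

/-- Restriction of an exponent vector to a set of coordinates. -/
noncomputable def lres (P : Set (Fin n)) (a : Fin n → ℤ) : Fin n → ℤ := P.indicator a

theorem lres_add (P : Set (Fin n)) (a b : Fin n → ℤ) : lres P (a + b) = lres P a + lres P b :=
  Set.indicator_add _ _ _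

/-- Partial evaluation at `ψ` of the variables in `P`. -/
noncomputable def lphi (ψ : LaurentAlgebra k n →ₐ[k] k) (P : Set (Fin n)) :
    LaurentAlgebra k n →ₐ[k] LaurentAlgebra k n :=
  AddMonoidAlgebra.lift k _ _
    { toFun := fun a => algebraMap k _ (ψ (lmon (lres P a.toAdd))) * lmon (lres Pᶜ a.toAdd)
      map_one' := by
        have h : ∀ Q : Set (Fin n), lres Q 0 = 0 := fun Q => Set.indicator_zero _ _
        rw [toAdd_one, h, h, lmon_zero, map_one, map_one, one_mul]
      map_mul' := fun a b => by
        simp only [toAdd_mul, lres_add, lmon_add, map_mul]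
        ring }

theorem lphi_lmon (ψ : LaurentAlgebra k n →ₐ[k] k) (P : Set (Fin n)) (a : Fin n → ℤ) :
    lphi ψ P (lmon a) = algebraMap k _ (ψ (lmon (lres P a))) * lmon (lres Pᶜ a) := by
  refine (AddMonoidAlgebra.lift_single _ _ _).trans ?_
  rw [one_smul]
  rfl

theorem lphi_lgen_mem (ψ : LaurentAlgebra k n →ₐ[k] k) (P : Set (Fin n)) (i : Fin n) (hi : i ∈ P) :
    lphi ψ P (lgen ψ i) = 0 := by
  have h1 : lres P (Pi.single i (1 : ℤ)) = Pi.single i 1 := by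
    ext j
    by_cases hj : j = i
    · subst hj; simp [lres, hi]
    · simp [lres, Set.indicator, hj]
  have h2 : lres Pᶜ (Pi.single i (1 : ℤ)) = 0 := by
    ext j
    by_cases hj : j = i
    · subst hj; simp [lres, hi]
    · simp [lres, Set.indicator, hj]
  rw [lgen, map_sub, lphi_lmon, h1, h2, lmon_zero, AlgHom.commutes]
  simp

theorem lphi_lgen_not_mem (ψ : LaurentAlgebra k n →ₐ[k] k) (P : Set (Fin n)) (i : Fin n)
    (hi : i ∉ P) : lphi ψ P (lgen ψ i) = lgen ψ i := by
  have h1 : lres P (Pi.single i (1 : ℤ)) = 0 := by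
    ext j
    by_cases hj : j = i
    · subst hj; simp [lres, hi]
    · simp [lres, Set.indicator, hj]
  have h2 : lres Pᶜ (Pi.single i (1 : ℤ)) = Pi.single i 1 := by
    ext j
    by_cases hj : j = i
    · subst hj; simp [lres, hi]
    · simp [lres, Set.indicator, hj]
  rw [lgen, map_sub, lphi_lmon, h1, h2, lmon_zero, AlgHom.commutes, map_one, map_one, one_mul]

theorem lgen_ne_zero (ψ : LaurentAlgebra k n →ₐ[k] k) (i : Fin n) : lgen ψ i ≠ 0 := by
  intro h
  rw [lgen, sub_eq_zero] at h
  have h1 := congrArg (fun r : LaurentAlgebra k n => r.coeff (Pi.single i 1)) h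
  have h0 : (0 : Fin n → ℤ) ≠ Pi.single i 1 := fun h => by simpa using congrFun h i
  simp [lmon, AddMonoidAlgebra.coe_algebraMap] at h1

theorem lmon_congr (ψ : LaurentAlgebra k n →ₐ[k] k) (P : Set (Fin n)) (I : Ideal (LaurentAlgebra k n))
    (hI : ∀ i ∈ P, lgen ψ i ∈ I) (a : Fin n → ℤ) :
    Ideal.Quotient.mk I (lmon (lres P a)) =
      Ideal.Quotient.mk I (algebraMap k _ (ψ (lmon (lres P a)))) := by
  let f : Multiplicative (Fin n → ℤ) →* LaurentAlgebra k n ⧸ I :=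
    (Ideal.Quotient.mk I : LaurentAlgebra k n →* LaurentAlgebra k n ⧸ I).comp (AddMonoidAlgebra.of k _)
  let g : Multiplicative (Fin n → ℤ) →* LaurentAlgebra k n ⧸ I :=
    (Ideal.Quotient.mk I : LaurentAlgebra k n →* LaurentAlgebra k n ⧸ I).comp (((algebraMap k (LaurentAlgebra k n) : k →+* LaurentAlgebra k n) :
      k →* LaurentAlgebra k n).comp
      ((ψ : LaurentAlgebra k n →* k).comp (AddMonoidAlgebra.of k _)))
  let S : AddSubgroup (Fin n → ℤ) := (f.eqLocus g).toAddSubgroup'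
  have hS : ∀ b, b ∈ S ↔ Ideal.Quotient.mk I (lmon b) =
      Ideal.Quotient.mk I (algebraMap k _ (ψ (lmon b))) := fun b => Iff.rfl
  rw [← hS, ← Finset.univ_sum_single (lres P a)]
  refine S.sum_mem fun i _ => ?_
  by_cases hi : i ∈ P
  · have : (Pi.single i (lres P a i) : Fin n → ℤ) = lres P a i • Pi.single i 1 := by
      rw [← Pi.single_smul]; simp
    rw [this]
    refine S.zsmul_mem ?_ _
    rw [hS, Ideal.Quotient.eq]
    exact hI i hi
  · have : lres P a i = 0 := by simp [lres, hi]
    rw [this, Pi.single_zero]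
    exact S.zero_mem

theorem mk_lphi (ψ : LaurentAlgebra k n →ₐ[k] k) (P : Set (Fin n)) (I : Ideal (LaurentAlgebra k n))
    (hI : ∀ i ∈ P, lgen ψ i ∈ I) (r : LaurentAlgebra k n) :
    Ideal.Quotient.mk I (lphi ψ P r) = Ideal.Quotient.mk I r := by
  have : (Ideal.Quotient.mkₐ k I).comp (lphi ψ P) = Ideal.Quotient.mkₐ k I := by
    refine AddMonoidAlgebra.algHom_ext' ?_ (by ext)
    refine MonoidHom.ext fun a => ?_
    change Ideal.Quotient.mk I (lphi ψ P (lmon a.toAdd)) = Ideal.Quotient.mk I (lmon a.toAdd)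
    rw [lphi_lmon, map_mul, ← lmon_congr ψ P I hI, ← map_mul, ← lmon_add]
    congr 2
    exact Set.indicator_self_add_compl _ _
  exact DFunLike.congr_fun this r

theorem ker_lphi (ψ : LaurentAlgebra k n →ₐ[k] k) (P : Set (Fin n)) :
    RingHom.ker (lphi ψ P) = Ideal.span (Set.image (lgen ψ) P) := by
  apply le_antisymm
  · intro r hr
    rw [← Ideal.Quotient.eq_zero_iff_mem, ← mk_lphi ψ P (Ideal.span (Set.image (lgen ψ) P))
      (fun i hi => Ideal.subset_span ⟨i, hi, rfl⟩), (hr : lphi ψ P r = 0), map_zero]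
  · rw [Ideal.span_le]
    rintro _ ⟨i, hi, rfl⟩
    exact lphi_lgen_mem ψ P i hi

theorem ker_lphi_univ (ψ : LaurentAlgebra k n →ₐ[k] k) :
    RingHom.ker (lphi ψ Set.univ) = RingHom.ker ψ := by
  have : lphi ψ Set.univ = (Algebra.ofId k _).comp ψ := by
    refine AddMonoidAlgebra.algHom_ext' ?_ (by ext)
    refine MonoidHom.ext fun a => ?_
    change lphi ψ _ (lmon a.toAdd) = algebraMap k _ (ψ (lmon a.toAdd))
    have h1 : lres Set.univ a.toAdd = a.toAdd := Set.indicator_univ _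
    have h2 : lres (Set.univ : Set (Fin n))ᶜ a.toAdd = 0 := by
      rw [Set.compl_univ]; exact Set.indicator_empty _
    rw [lphi_lmon, h1, h2, lmon_zero, mul_one]
  ext r
  rw [RingHom.mem_ker, RingHom.mem_ker, this]
  change algebraMap k (LaurentAlgebra k n) (ψ r) = 0 ↔ _
  exact map_eq_zero_iff _ (algebraMap k (LaurentAlgebra k n)).injective

/-- The regular sequence. -/
noncomputable def lseq (ψ : LaurentAlgebra k n →ₐ[k] k) : List (LaurentAlgebra k n) :=
  List.ofFn (lgen ψ)

theorem ofList_take (ψ : LaurentAlgebra k n →ₐ[k] k) (j : ℕ) :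
    Ideal.ofList ((lseq ψ).take j) = Ideal.span (Set.image (lgen ψ) {i | (i : ℕ) < j}) := by
  unfold Ideal.ofList
  congr 1
  ext r
  simp only [Set.mem_ofPred_eq, Set.mem_image, List.mem_take_iff_getElem, lseq]
  constructor
  · rintro ⟨i, hi, rfl⟩
    simp only [List.length_ofFn, lt_min_iff] at hi
    exact ⟨⟨i, hi.2⟩, hi.1, by simp⟩
  · rintro ⟨i, hi, rfl⟩
    exact ⟨i, by simp [hi], by simp⟩

theorem lseq_regular (ψ : LaurentAlgebra k n →ₐ[k] k) :
    IsWeaklyRegular (LaurentAlgebra k n) (lseq ψ) := by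
  rw [isWeaklyRegular_iff_Fin]
  intro i
  have hi : (i : ℕ) < n := by simpa [lseq] using i.2
  have hx : (lseq ψ)[i] = lgen ψ ⟨i, hi⟩ := by
    rw [Fin.getElem_fin]; simp only [lseq, List.getElem_ofFn]
  rw [hx, isSMulRegular_iff_right_eq_zero_of_smul]
  intro m
  obtain ⟨r, rfl⟩ := Submodule.Quotient.mk_surjective _ m
  rw [← Submodule.Quotient.mk_smul, Submodule.Quotient.mk_eq_zero, Submodule.Quotient.mk_eq_zero,
    ofList_take, smul_eq_mul, Ideal.mul_top, ← ker_lphi, RingHom.mem_ker, RingHom.mem_ker,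
    smul_eq_mul, map_mul, lphi_lgen_not_mem _ _ _ (by simp)]
  intro h
  exact (mul_eq_zero.1 h).resolve_left (lgen_ne_zero ψ _)

theorem ofList_lseq (ψ : LaurentAlgebra k n →ₐ[k] k) :
    Ideal.ofList (lseq ψ) = RingHom.ker ψ := by
  have h := ofList_take ψ n
  rw [List.take_of_length_le (by simp [lseq])] at h
  rw [h, ← ker_lphi_univ, ker_lphi]
  congr 2
  ext i; simp

end Alg

theorem laurent_character_projective_dimension (k : Type) [Field k] (n : ℕ)
    (ψ : LaurentAlgebra k n →ₐ[k] k) :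
    letI : Module (LaurentAlgebra k n) k := Module.compHom k ψ.toRingHom
    ProjDimLE (LaurentAlgebra k n) n k ∧
      (1 ≤ n → ¬ ProjDimLE (LaurentAlgebra k n) (n - 1) k) := by
  letI : Module (LaurentAlgebra k n) k := Module.compHom k ψ.toRingHom
  change ProjDimLE (LaurentAlgebra k n) n k ∧
      (1 ≤ n → ¬ ProjDimLE (LaurentAlgebra k n) (n - 1) k)
  have hsm : ∀ (r : LaurentAlgebra k n) (y : k), r • y = ψ r * y := fun _ _ => rfl
  let p : LaurentAlgebra k n →ₗ[LaurentAlgebra k n] k :=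
    LinearMap.toSpanSingleton (LaurentAlgebra k n) k 1
  have hp : ∀ r, p r = ψ r := fun r => by
    rw [LinearMap.toSpanSingleton_apply, hsm, mul_one]
  have hps : Function.Surjective p := fun y => ⟨algebraMap k _ y, by
    rw [hp, AlgHom.commutes]; rfl⟩
  have hker : Ideal.ofList (lseq ψ) • (⊤ : Submodule (LaurentAlgebra k n) (LaurentAlgebra k n)) =
      LinearMap.ker p := by
    rw [ofList_lseq, smul_eq_mul, Ideal.mul_top]
    ext r
    rw [RingHom.mem_ker, LinearMap.mem_ker, hp]
  let e := (Submodule.quotEquivOfEq _ _ hker).trans (p.quotKerEquivOfSurjective hps)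
  let M := ModuleCat.of (LaurentAlgebra k n) (LaurentAlgebra k n)
  let N := ModuleCat.of (LaurentAlgebra k n) k
  have hM : CategoryTheory.Projective M := (IsProjective.iff_projective _).1 inferInstance
  have hnt : Nontrivial (CategoryTheory.Abelian.Ext M N 0) := by
    rw [CategoryTheory.Abelian.Ext.homEquiv₀.nontrivial_congr]
    refine ⟨ModuleCat.ofHom p, 0, fun h => ?_⟩
    have h1 : p 1 = 0 := congrArg (fun q : M ⟶ N => q.hom (1 : LaurentAlgebra k n)) h
    rw [hp, map_one] at h1
    exact one_ne_zero h1
  have hkill : ∀ x ∈ lseq ψ, ∀ y : N, x • y = 0 := by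
    intro x hx (y : k)
    have : x ∈ RingHom.ker ψ := by
      rw [← ofList_lseq]; exact Ideal.subset_span hx
    change ψ x * y = 0
    rw [(this : ψ x = 0), zero_mul]
  obtain ⟨h1, h2⟩ := pd_list (lseq ψ) M N (lseq_regular ψ) hkill 0
    ((CategoryTheory.projective_iff_hasProjectiveDimensionLE_zero _).1 hM) hnt
  have hlen : 0 + (lseq ψ).length = n := by simp [lseq]
  rw [hlen] at h1 h2
  refine ⟨(projDimLE_iff _ _).2 (CategoryTheory.hasProjectiveDimensionLT_of_iso e.toModuleIso _),
    fun hn h => ?_⟩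
  rw [projDimLE_iff, CategoryTheory.HasProjectiveDimensionLE] at h
  have h3 : CategoryTheory.HasProjectiveDimensionLT N n := by
    have hle : n - 1 + 1 ≤ n := by omega
    exact CategoryTheory.hasProjectiveDimensionLT_of_ge _ (n - 1 + 1) n hle
  have h4 := CategoryTheory.hasProjectiveDimensionLT_of_iso e.toModuleIso.symm n
  have := CategoryTheory.HasProjectiveDimensionLT.subsingleton _ n n le_rfl N (hX := h4)
  exact not_subsingleton _ this
end
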